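/- arXiv:0812.4266 — 4 statements merged into one kernel-verified Lean document; each statement's English description precedes it below -/
import Mathlib

section
/- For every n ≥ 2 and every j ∈ {0,…,n}, the restriction of the SSA map T to the set {x ∈ B(j) : x_1 > 0} is injective. -/
/-- Entry access with junk value `0` outside the index range: `ent x m = x_{m+1}`
(0-based coordinate `m`) for `m < n`, and `0` otherwise. -/
noncomputable def ent {n : ℕ} (x : Fin n → ℝ) (m : ℕ) : ℝ :=
  if h : m < n then x ⟨m, h⟩ else 0

/-- `B^n = {x ∈ ℝ^n : 1 ≥ x₁ ≥ x₂ ≥ ⋯ ≥ x_n ≥ 0}` (note that the stated antitonicity of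
the `0`-extended sequence `ent x` encodes both the ordering and `x_n ≥ 0`). -/
def Bset (n : ℕ) : Set (Fin n → ℝ) :=
  {x | ent x 0 ≤ 1 ∧ ∀ i j : ℕ, i ≤ j → ent x j ≤ ent x i}

/-- The index `j(x) = #{l ∈ {1,…,n} : x_l > 1 − x_n}` of the SSA. -/
noncomputable def ssaJ {n : ℕ} (x : Fin n → ℝ) : ℕ :=
  (Finset.univ.filter fun l : Fin n => 1 - ent x (n - 1) < x l).card

/-- The subtractive Selmer algorithm (SSA) map `T` on `B^n`:
if `j(x) = 0` then `Tx = (x₁/(1−x_n), …, x_n/(1−x_n))`, and if `1 ≤ j(x) ≤ n` then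
`Tx = (x₂/x₁, …, x_j/x₁, (1−x_n)/x₁, x_{j+1}/x₁, …, x_n/x₁)` with `(1−x_n)/x₁` in
position `j` (1-based positions; coordinate `i : Fin n` is position `i+1`). -/
noncomputable def ssaT {n : ℕ} (x : Fin n → ℝ) : Fin n → ℝ :=
  if ssaJ x = 0 then fun i => x i / (1 - ent x (n - 1))
  else fun i =>
    if (i : ℕ) + 1 < ssaJ x then ent x ((i : ℕ) + 1) / ent x 0
    else if (i : ℕ) + 1 = ssaJ x then (1 - ent x (n - 1)) / ent x 0
    else x i / ent x 0

/-!
Dividing the numbers `x₁, …, x_n, 1 - x_n` by one of them (`1 - x_n` if `j(x) = 0`, and `x₁`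
otherwise) and dropping the resulting entry `1` gives `T x`, in an order that depends only on
`j(x)`. Since `x_n + (1 - x_n) = 1`, the quotients determine the divisor and hence `x`.
-/

theorem eq_of_one_sub_div_eq_of_div_eq {ι K : Type*} [DivisionRing K] {u v : ι → K} {c d : K}
    {k : ι} (hc : c ≠ 0) (hk : (1 - u k) / c = (1 - v k) / d) (huv : ∀ i, u i / c = v i / d) :
    u = v := by
  have hcd : c = d := by
    have hinv : c⁻¹ = d⁻¹ := by
      calc c⁻¹ = (1 - u k) / c + u k / c := by rw [← add_div, sub_add_cancel, one_div]
        _ = (1 - v k) / d + v k / d := by rw [hk, huv k]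
        _ = d⁻¹ := by rw [← add_div, sub_add_cancel, one_div]
    exact inv_injective hinv
  subst hcd
  exact funext fun i => (div_left_inj' hc).mp (huv i)

section

variable {n m : ℕ} {x : Fin n → ℝ}

theorem ent_of_lt (x : Fin n → ℝ) (hm : m < n) : ent x m = x ⟨m, hm⟩ :=
  dif_pos hm

theorem ent_of_le (x : Fin n → ℝ) (hm : n ≤ m) : ent x m = 0 :=
  dif_neg hm.not_gt

theorem lt_of_ent_ne_zero (hx : ent x m ≠ 0) : m < n :=
  not_le.mp fun hm => hx (ent_of_le x hm)

theorem ent_injective : Function.Injective (ent : (Fin n → ℝ) → ℕ → ℝ) := fun x z h => by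
  funext i
  simpa only [ent_of_lt _ i.isLt] using congrFun h i

theorem ssaJ_le (x : Fin n → ℝ) : ssaJ x ≤ n :=
  (Finset.card_le_univ _).trans_eq (Fintype.card_fin n)

theorem ssaJ_eq_zero_iff : ssaJ x = 0 ↔ ∀ l, x l ≤ 1 - ent x (n - 1) := by
  simp only [ssaJ, Finset.card_eq_zero, Finset.filter_eq_empty_iff, Finset.mem_univ,
    true_imp_iff, not_lt]

theorem one_sub_ent_last_pos (hJ : ssaJ x = 0) (hx : 0 < ent x 0) : 0 < 1 - ent x (n - 1) := by
  have hn : 0 < n := lt_of_ent_ne_zero hx.ne'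
  exact hx.trans_le ((ent_of_lt x hn).trans_le (ssaJ_eq_zero_iff.mp hJ ⟨0, hn⟩))

theorem ent_ssaT_of_ssaJ_eq_zero (hJ : ssaJ x = 0) (m : ℕ) :
    ent (ssaT x) m = ent x m / (1 - ent x (n - 1)) := by
  rcases lt_or_ge m n with hm | hm
  · simp only [ent_of_lt _ hm, ssaT, if_pos hJ]
  · simp only [ent_of_le _ hm, zero_div]

theorem ent_ssaT_of_succ_lt_ssaJ (hm : m + 1 < ssaJ x) :
    ent (ssaT x) m = ent x (m + 1) / ent x 0 := by
  have hmn : m < n := by have := ssaJ_le x; omega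
  rw [ent_of_lt (ssaT x) hmn]
  simp only [ssaT, if_neg (Nat.ne_zero_of_lt hm), if_pos hm]

theorem ent_ssaT_of_succ_eq_ssaJ (hm : m + 1 = ssaJ x) :
    ent (ssaT x) m = (1 - ent x (n - 1)) / ent x 0 := by
  have hmn : m < n := by have := ssaJ_le x; omega
  rw [ent_of_lt (ssaT x) hmn]
  simp only [ssaT, ← hm, m.succ_ne_zero, lt_irrefl, if_false, if_true]

theorem ent_ssaT_of_ssaJ_le (hJ : ssaJ x ≠ 0) (hm : ssaJ x ≤ m) :
    ent (ssaT x) m = ent x m / ent x 0 := by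
  rcases lt_or_ge m n with hmn | hmn
  · have hlt : ¬m + 1 < ssaJ x := by omega
    have hne : m + 1 ≠ ssaJ x := by omega
    simp only [ent_of_lt _ hmn, ssaT, if_neg hJ, if_neg hlt, if_neg hne]
  · simp only [ent_of_le _ hmn, zero_div]

end

theorem injOn_ssaT_ssaJ_eq_zero (n : ℕ) :
    Set.InjOn ssaT {x : Fin n → ℝ | ssaJ x = 0 ∧ 1 - ent x (n - 1) ≠ 0} := by
  rintro x ⟨hxJ, hx⟩ z ⟨hzJ, hz⟩ hT
  have hlast : (1 - ent x (n - 1)) / (1 - ent x (n - 1)) =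
      (1 - ent z (n - 1)) / (1 - ent z (n - 1)) := by
    rw [div_self hx, div_self hz]
  refine ent_injective (eq_of_one_sub_div_eq_of_div_eq hx hlast fun m => ?_)
  rw [← ent_ssaT_of_ssaJ_eq_zero hxJ, hT, ent_ssaT_of_ssaJ_eq_zero hzJ]

theorem injOn_ssaT_ssaJ_eq_succ (n k : ℕ) :
    Set.InjOn ssaT {x : Fin n → ℝ | ssaJ x = k + 1 ∧ ent x 0 ≠ 0} := by
  rintro x ⟨hxJ, hx⟩ z ⟨hzJ, hz⟩ hT
  have hlast : (1 - ent x (n - 1)) / ent x 0 = (1 - ent z (n - 1)) / ent z 0 := by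
    rw [← ent_ssaT_of_succ_eq_ssaJ hxJ.symm, hT, ent_ssaT_of_succ_eq_ssaJ hzJ.symm]
  refine ent_injective (eq_of_one_sub_div_eq_of_div_eq hx hlast fun m => ?_)
  rcases m with _ | m
  · rw [div_self hx, div_self hz]
  · rcases lt_or_ge m k with hm | hm
    · rw [← ent_ssaT_of_succ_lt_ssaJ (by omega), hT, ent_ssaT_of_succ_lt_ssaJ (by omega)]
    · rw [← ent_ssaT_of_ssaJ_le (by omega) (by omega), hT,
        ent_ssaT_of_ssaJ_le (by omega) (by omega)]

theorem ssa_injOn_cells_general (n j : ℕ) :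
    Set.InjOn ssaT {x : Fin n → ℝ | ssaJ x = j ∧ 0 < ent x 0} := by
  rcases j with _ | k
  · refine (injOn_ssaT_ssaJ_eq_zero n).mono ?_
    rintro x ⟨hJ, hx⟩
    exact ⟨hJ, (one_sub_ent_last_pos hJ hx).ne'⟩
  · refine (injOn_ssaT_ssaJ_eq_succ n k).mono ?_
    rintro x ⟨hJ, hx⟩
    exact ⟨hJ, hx.ne'⟩

/-- **Injectivity of the SSA on each cell.** For every `n ≥ 2` and every `j ∈ {0,…,n}`,
the restriction of the SSA map `T` to `{x ∈ B(j) : x₁ > 0}` is injective,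
where `B(j) = {x ∈ B^n : j(x) = j}`. -/
theorem ssa_injOn_cells (n : ℕ) (hn : 2 ≤ n) (j : ℕ) (hj : j ≤ n) :
    Set.InjOn ssaT {x : Fin n → ℝ | x ∈ Bset n ∧ ssaJ x = j ∧ 0 < ent x 0} :=
  (ssa_injOn_cells_general n j).mono fun _ hx => hx.2
end

section
/- For the 2-dimensional SSA map T and the point x = (∛4 − 1, ∛2 − 1) ∈ B², one has T^{31} x = T x; that is, the SSA expansion of x is eventually periodic with preperiod length 1 and period length dividing 30. -/
/-!
Homogeneous coordinates turn the SSA on `B²` into the map which replaces a triple `a ≥ b ≥ c` by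
`a - c, b, c`, sorted again; the digit `j` records where `a - c` lands. Its inverse branches are
linear. On the cone `c < b < a < b + c` those with digits `1` and `2` are both defined, and they
map the cone into itself, so there every word in these digits is admissible. Consequently
an eigenvector, lying in the cone, of the integer matrix of a word is a periodic point whose period
divides the length of the word.

The first step sends `x` to the class of `(2 - θ, θ² - 1, θ - 1)` with `θ = ∛2`. This triple lies in
the cone and is an eigenvector of the matrix of a word of length 30.
-/

/-- The chart `(v₀ : v₁ : ⋯ : vₙ) ↦ (v₁ / v₀, …, vₙ / v₀)` of projective space, through which the
SSA is studied in homogeneous coordinates. -/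
noncomputable def affineChart {n : ℕ} (v : Fin (n + 1) → ℝ) : Fin n → ℝ :=
  fun i => v i.succ / v 0

lemma affineChart_smul {n : ℕ} {r : ℝ} (hr : r ≠ 0) (v : Fin (n + 1) → ℝ) :
    affineChart (r • v) = affineChart v := by
  ext i
  simp only [affineChart, Pi.smul_apply, smul_eq_mul, mul_div_mul_left _ _ hr]

lemma affineChart_vec3 (a b c : ℝ) : affineChart ![a, b, c] = ![b / a, c / a] := by
  ext i
  fin_cases i <;> rfl

section HomogeneousSSA

variable {a b c : ℝ}

lemma one_sub_div_lt_div_iff (ha : 0 < a) : 1 - c / a < b / a ↔ a - c < b := by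
  rw [one_sub_div ha.ne', div_lt_div_iff_of_pos_right ha]

lemma ssaJ_affineChart (ha : 0 < a) :
    ssaJ (affineChart ![a, b, c]) =
      (if a - c < b then 1 else 0) + (if a - c < c then 1 else 0) := by
  simp only [ssaJ, Finset.card_filter, Fin.sum_univ_two, affineChart_vec3]
  simp [ent, one_sub_div_lt_div_iff ha]

lemma ssaT_affineChart_of_le (ha : 0 < a) (hcb : c ≤ b) (h : b ≤ a - c) :
    ssaT (affineChart ![a, b, c]) = affineChart ![a - c, b, c] := by
  have hJ : ssaJ (affineChart ![a, b, c]) = 0 := by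
    simp [ssaJ_affineChart ha, h, hcb.trans h]
  rw [affineChart_vec3] at hJ
  ext i
  fin_cases i <;>
    simp [ssaT, hJ, ent, affineChart_vec3, one_sub_div ha.ne', div_div_div_cancel_right₀ ha.ne']

lemma ssaT_affineChart_of_lt_of_le (ha : 0 < a) (hb : a - c < b) (hc : c ≤ a - c) :
    ssaT (affineChart ![a, b, c]) = affineChart ![b, a - c, c] := by
  have hJ : ssaJ (affineChart ![a, b, c]) = 1 := by
    simp [ssaJ_affineChart ha, hb, hc]
  rw [affineChart_vec3] at hJ
  ext i
  fin_cases i <;>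
    simp [ssaT, hJ, ent, affineChart_vec3, one_sub_div ha.ne', div_div_div_cancel_right₀ ha.ne']

lemma ssaT_affineChart_of_lt (ha : 0 < a) (hcb : c ≤ b) (h : a - c < c) :
    ssaT (affineChart ![a, b, c]) = affineChart ![b, c, a - c] := by
  have hJ : ssaJ (affineChart ![a, b, c]) = 2 := by
    simp [ssaJ_affineChart ha, h, h.trans_le hcb]
  rw [affineChart_vec3] at hJ
  ext i
  fin_cases i <;>
    simp [ssaT, hJ, ent, affineChart_vec3, one_sub_div ha.ne', div_div_div_cancel_right₀ ha.ne']

end HomogeneousSSA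

/-- The inverse branches of the 2-dimensional SSA in homogeneous coordinates, indexed by the
digit `j(x)` of the preimage. -/
def inverseBranch : Fin 3 → (Fin 3 → ℝ) → Fin 3 → ℝ
  | 0, v => ![v 0 + v 2, v 1, v 2]
  | 1, v => ![v 1 + v 2, v 0, v 2]
  | 2, v => ![v 1 + v 2, v 0, v 1]

/-- The cone over the interior of the triangle `x₁ ≥ x₂`, `x₁ ≤ 1`, `x₁ + x₂ ≥ 1`, the part of `B²`
which the SSA never leaves. -/
def absorbingCone : Set (Fin 3 → ℝ) :=
  {v | v 2 < v 1 ∧ v 1 < v 0 ∧ v 0 < v 1 + v 2}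

lemma ssaT_affineChart_inverseBranch {v : Fin 3 → ℝ} (hv : v ∈ absorbingCone) (j : Fin 3) :
    ssaT (affineChart (inverseBranch j v)) = affineChart v := by
  obtain ⟨h₂₁, h₁₀, h₀⟩ := hv
  have hv_eq : ![v 0, v 1, v 2] = v := by
    ext i
    fin_cases i <;> rfl
  match j with
  | 0 =>
    rw [inverseBranch, ssaT_affineChart_of_le (by linarith) (by linarith) (by linarith),
      add_sub_cancel_right, hv_eq]
  | 1 =>
    rw [inverseBranch, ssaT_affineChart_of_lt_of_le (by linarith) (by linarith) (by linarith),
      add_sub_cancel_right, hv_eq]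
  | 2 =>
    rw [inverseBranch, ssaT_affineChart_of_lt (by linarith) (by linarith) (by linarith),
      add_sub_cancel_left, hv_eq]

lemma inverseBranch_mem_absorbingCone {v : Fin 3 → ℝ} (hv : v ∈ absorbingCone) {j : Fin 3}
    (hj : j ≠ 0) : inverseBranch j v ∈ absorbingCone := by
  obtain ⟨h₂₁, h₁₀, h₀⟩ := hv
  match j with
  | 1 => exact ⟨h₂₁.trans h₁₀, h₀, add_lt_add_left h₁₀ (v 2)⟩
  | 2 => exact ⟨h₁₀, h₀, (add_comm (v 1) (v 2)).trans_lt (add_lt_add_left (h₂₁.trans h₁₀) (v 1))⟩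

lemma foldr_inverseBranch_mem_absorbingCone {v : Fin 3 → ℝ} (hv : v ∈ absorbingCone)
    {w : List (Fin 3)} (hw : 0 ∉ w) : w.foldr inverseBranch v ∈ absorbingCone := by
  induction w with
  | nil => exact hv
  | cons j w ih =>
    obtain ⟨hj, hw⟩ := List.ne_and_not_mem_of_not_mem_cons hw
    exact inverseBranch_mem_absorbingCone (ih hw) hj.symm

lemma ssaT_iterate_affineChart_foldr {v : Fin 3 → ℝ} (hv : v ∈ absorbingCone)
    {w : List (Fin 3)} (hw : 0 ∉ w) :
    ssaT^[w.length] (affineChart (w.foldr inverseBranch v)) = affineChart v := by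
  induction w with
  | nil => rfl
  | cons j w ih =>
    have hw' : 0 ∉ w := List.not_mem_of_not_mem_cons hw
    rw [List.length_cons, List.foldr_cons, Function.iterate_succ_apply,
      ssaT_affineChart_inverseBranch (foldr_inverseBranch_mem_absorbingCone hv hw'), ih hw']

theorem isPeriodicPt_affineChart_of_foldr_eq_smul {v : Fin 3 → ℝ} (hv : v ∈ absorbingCone)
    {w : List (Fin 3)} (hw : 0 ∉ w) {r : ℝ} (h : w.foldr inverseBranch v = r • v) :
    Function.IsPeriodicPt ssaT w.length (affineChart v) := by
  have hr : r ≠ 0 := by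
    rintro rfl
    have h_mem := foldr_inverseBranch_mem_absorbingCone hv hw
    rw [h, zero_smul] at h_mem
    exact lt_irrefl _ h_mem.1
  have h_iterate := ssaT_iterate_affineChart_foldr hv hw
  rwa [h, affineChart_smul hr] at h_iterate

/-- The triple `(2 - θ, θ² - 1, θ - 1)`, which for `θ = ∛2` represents the first SSA iterate
of `(∛4 - 1, ∛2 - 1)`. -/
def cubicTriple (θ : ℝ) : Fin 3 → ℝ :=
  ![2 - θ, θ ^ 2 - 1, θ - 1]

/-- The repeating block of digits in the SSA expansion of `(∛4 - 1, ∛2 - 1)`, in order. -/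
def periodWord : List (Fin 3) :=
  [1, 1, 2, 2, 1, 1, 2, 1, 1, 2, 1, 1, 2, 2, 1, 1, 1, 1, 2, 2, 1, 1, 1, 1, 1, 1, 2, 2, 1, 1]

lemma foldr_inverseBranch_periodWord (v : Fin 3 → ℝ) :
    periodWord.foldr inverseBranch v =
      Matrix.mulVec !![504, 131, 669; 400, 104, 531; 177, 46, 235] v := by
  ext i
  fin_cases i <;>
    simp only [periodWord, List.foldr, inverseBranch, Matrix.mulVec, dotProduct,
      Fin.sum_univ_three, Matrix.of_apply, Matrix.cons_val, Fin.reduceFinMk, Fin.zero_eta,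
      Fin.mk_one] <;>
    ring

section CubeRootOfTwo

variable {θ : ℝ} (hθ : θ ^ 3 = 2)
include hθ

-- The eigenvalue is `(θ - 1)⁻⁵`, a power of the fundamental unit of `ℤ[∛2]`.
lemma foldr_inverseBranch_cubicTriple :
    periodWord.foldr inverseBranch (cubicTriple θ) =
      (281 + 223 * θ + 177 * θ ^ 2) • cubicTriple θ := by
  rw [foldr_inverseBranch_periodWord]
  ext i
  fin_cases i <;>
    simp only [cubicTriple, Matrix.mulVec, dotProduct, Fin.sum_univ_three, Matrix.of_apply,
      Matrix.cons_val, Pi.smul_apply, smul_eq_mul, Fin.reduceFinMk, Fin.zero_eta, Fin.mk_one]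
  · linear_combination 177 * hθ
  · linear_combination (-223 - 177 * θ) * hθ
  · linear_combination -177 * hθ

lemma cubicTriple_mem_absorbingCone : cubicTriple θ ∈ absorbingCone := by
  have h_odd : Odd 3 := by decide
  have h_lower : 5 / 4 < θ := h_odd.pow_lt_pow.mp (by rw [hθ]; norm_num)
  have h_upper : θ < 13 / 10 := h_odd.pow_lt_pow.mp (by rw [hθ]; norm_num)
  refine ⟨?_, ?_, ?_⟩ <;> simp only [cubicTriple, Matrix.cons_val] <;> nlinarith

lemma isPeriodicPt_affineChart_cubicTriple :
    Function.IsPeriodicPt ssaT 30 (affineChart (cubicTriple θ)) :=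
  isPeriodicPt_affineChart_of_foldr_eq_smul (w := periodWord) (cubicTriple_mem_absorbingCone hθ)
    (by decide) (foldr_inverseBranch_cubicTriple hθ)

lemma ssaT_eq_affineChart_cubicTriple :
    ssaT ![θ ^ 2 - 1, θ - 1] = affineChart (cubicTriple θ) := by
  have h_preimage : affineChart (inverseBranch 0 (cubicTriple θ)) = ![θ ^ 2 - 1, θ - 1] := by
    have h_sum : 2 - θ + (θ - 1) = 1 := by ring
    simp only [inverseBranch, cubicTriple, Matrix.cons_val, affineChart_vec3, h_sum, div_one]
  rw [← h_preimage, ssaT_affineChart_inverseBranch (cubicTriple_mem_absorbingCone hθ)]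

end CubeRootOfTwo

/-- **A periodic SSA expansion.** For the 2-dimensional SSA map `T` and the point
`x = (∛4 − 1, ∛2 − 1) ∈ B²`, one has `T^31 x = T x`: the SSA expansion of `x` is
eventually periodic with preperiod length 1 and period length dividing 30. -/
theorem ssa_periodic_example :
    ssaT^[31] ![(4 : ℝ) ^ ((1 : ℝ) / 3) - 1, (2 : ℝ) ^ ((1 : ℝ) / 3) - 1]
      = ssaT ![(4 : ℝ) ^ ((1 : ℝ) / 3) - 1, (2 : ℝ) ^ ((1 : ℝ) / 3) - 1] := by
  set θ : ℝ := 2 ^ ((1 : ℝ) / 3) with hθ_def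
  have hθ : θ ^ 3 = 2 := by
    rw [hθ_def, ← Real.rpow_mul_natCast zero_le_two]
    norm_num
  have h_four : (4 : ℝ) ^ ((1 : ℝ) / 3) = θ ^ 2 := by
    rw [hθ_def, Real.rpow_pow_comm zero_le_two]
    norm_num
  rw [h_four, Function.iterate_succ_apply, ssaT_eq_affineChart_cubicTriple hθ]
  exact isPeriodicPt_affineChart_cubicTriple hθ
end

section
/- For every n ≥ 1 and every integer k ≥ 1, the restriction of the MSA map S to the cell B(k) := {x ∈ B^n : 1/(k+1) < x_n ≤ 1/k} is injective. -/
open Matrix Filter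

/-- The MSA digit `k = ⌊1/x_n⌋`. -/
noncomputable def msaDigit {n : ℕ} (x : Fin n → ℝ) : ℤ :=
  ⌊(ent x (n - 1))⁻¹⌋

/-- The multiplicative Selmer algorithm (MSA) map
`S(x₁,…,x_n) = (x₂/x₁, …, x_n/x₁, (1 − k·x_n)/x₁)` with `k = ⌊1/x_n⌋`. -/
noncomputable def msaS {n : ℕ} (x : Fin n → ℝ) : Fin n → ℝ := fun i =>
  if (i : ℕ) + 1 < n then ent x ((i : ℕ) + 1) / ent x 0
  else (1 - (msaDigit x : ℝ) * ent x (n - 1)) / ent x 0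

/-!
The first `n - 1` coordinates of `S x` are `x₂/x₁, …, x_n/x₁`, so they determine `x` up to scaling.
The last one equals `1/x₁ - k · (x_n/x₁)`; once the digit `k` is known, it determines `1/x₁`, and
with it the scale.
-/

theorem floor_inv_eq_iff {K : Type*} [Field K] [LinearOrder K] [IsStrictOrderedRing K]
    [FloorRing K] {r : K} {k : ℤ} (hk : 0 < k) :
    ⌊r⁻¹⌋ = k ↔ 1 / ((k : K) + 1) < r ∧ r ≤ 1 / (k : K) := by
  have hk' : (0 : K) < k := Int.cast_pos.2 hk
  have hk₁ : (0 : K) < k + 1 := by positivity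
  rw [Int.floor_eq_iff, one_div, one_div]
  constructor
  · rintro ⟨hle, hlt⟩
    have hr : 0 < r := inv_pos.1 (hk'.trans_le hle)
    exact ⟨inv_lt_of_inv_lt₀ hr hlt, le_inv_of_le_inv₀ hk' hle⟩
  · rintro ⟨hlt, hle⟩
    have hr : 0 < r := (inv_pos.2 hk₁).trans hlt
    exact ⟨le_inv_of_le_inv₀ hr hle, inv_lt_of_inv_lt₀ hk₁ hlt⟩

theorem ent_coe {n : ℕ} (x : Fin n → ℝ) (i : Fin n) : ent x i = x i := by
  simp [ent]

section

variable {n : ℕ}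

theorem msaS_castSucc (x : Fin (n + 1) → ℝ) (i : Fin n) :
    msaS x i.castSucc = x i.succ / x 0 := by
  simp [msaS, ent, Fin.succ]

theorem msaS_last (x : Fin (n + 1) → ℝ) :
    msaS x (Fin.last n) = (x 0)⁻¹ - msaDigit x * (x (Fin.last n) / x 0) := by
  have h : msaS x (Fin.last n) = (1 - msaDigit x * x (Fin.last n)) / x 0 := by
    simp [msaS, ent, Fin.last]
  rw [h, sub_div, one_div, mul_div_assoc]

variable {x y : Fin (n + 1) → ℝ}

theorem div_apply_zero_eq_of_msaS_eq (hx : x 0 ≠ 0) (hy : y 0 ≠ 0) (h : msaS x = msaS y)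
    (i : Fin (n + 1)) : x i / x 0 = y i / y 0 := by
  cases i using Fin.cases with
  | zero => rw [div_self hx, div_self hy]
  | succ i => rw [← msaS_castSucc, ← msaS_castSucc, h]

theorem eq_of_msaS_eq_of_msaDigit_eq (hx : x 0 ≠ 0) (hy : y 0 ≠ 0)
    (hdigit : msaDigit x = msaDigit y) (h : msaS x = msaS y) : x = y := by
  have hratio := div_apply_zero_eq_of_msaS_eq hx hy h
  have hscale : x 0 = y 0 := by
    have hlast := congrFun h (Fin.last n)
    rw [msaS_last, msaS_last, hdigit, hratio] at hlast
    exact inv_injective (sub_left_injective hlast)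
  funext i
  rw [← div_left_inj' hx, hratio i, hscale]

end

theorem msa_injOn_cells_general (n : ℕ) (k : ℤ) :
    Set.InjOn msaS {x : Fin n → ℝ | ent x 0 ≠ 0 ∧ msaDigit x = k} := by
  rintro x ⟨hx, hxk⟩ y ⟨hy, hyk⟩ h
  cases n with
  | zero => exact Subsingleton.elim x y
  | succ n =>
    exact eq_of_msaS_eq_of_msaDigit_eq (ent_coe x 0 ▸ hx) (ent_coe y 0 ▸ hy)
      (hxk.trans hyk.symm) h

/-- **Injectivity of the MSA on each cell.** For every `n ≥ 1` and every integer `k ≥ 1`,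
the restriction of the MSA map `S` to the cell
`B(k) = {x ∈ B^n : 1/(k+1) < x_n ≤ 1/k}` is injective. -/
theorem msa_injOn_cells (n : ℕ) (hn : 1 ≤ n) (k : ℤ) (hk : 1 ≤ k) :
    Set.InjOn msaS
      {x : Fin n → ℝ | x ∈ Bset n ∧
        1 / ((k : ℝ) + 1) < ent x (n - 1) ∧ ent x (n - 1) ≤ 1 / (k : ℝ)} := by
  refine (msa_injOn_cells_general n k).mono ?_
  rintro x ⟨hB, hcell⟩
  have hlast : 0 < ent x (n - 1) := lt_trans (by positivity) hcell.1
  exact ⟨(hlast.trans_le (hB.2 0 (n - 1) (Nat.zero_le _))).ne', (floor_inv_eq_iff hk).2 hcell⟩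
end

section
/- For every n ≥ 1 and every integer k ≥ 1, all entries of the matrix power β(k)^p are strictly positive for every p ≥ n² + 1. -/
open Matrix Filter

/-- The Selmer matrix `β(k)`: the `(n+1)×(n+1)` real matrix (rows and columns indexed by
`0,…,n`) whose only nonzero entries are `β(k)_{0,n−1} = k`, `β(k)_{0,n} = 1`, and
`β(k)_{i,i−1} = 1` for `1 ≤ i ≤ n`. -/
noncomputable def selmerBeta (n : ℕ) (k : ℤ) : Matrix (Fin (n + 1)) (Fin (n + 1)) ℝ :=
  Matrix.of fun i j =>
    if (i : ℕ) = 0 ∧ (j : ℕ) = n - 1 then (k : ℝ)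
    else if (i : ℕ) = 0 ∧ (j : ℕ) = n then 1
    else if (j : ℕ) + 1 = (i : ℕ) then 1 else 0

/-
Multiplying by `β = β(k)` on the left shifts rows down, and multiplying on the right shifts columns,
so for `p > n` every entry of `β ^ p` is one of the numbers `a m = (β ^ m) 0 0`. They satisfy
`a 0 = 1`, `a n = k` and the recurrence `a (m + n + 1) = k * a (m + 1) + a m` belonging to the
Selmer trinomial `X ^ (n + 1) - k * X - 1`. Hence `a` is positive on the numerical semigroup
generated by `n` and `n + 1`, which by Sylvester's theorem contains every integer `≥ (n - 1) * n`.
-/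

lemma selmerBeta_apply_nonneg (n : ℕ) {k : ℤ} (hk : 0 ≤ k) (i j : Fin (n + 1)) :
    0 ≤ selmerBeta n k i j := by
  have hk' : (0 : ℝ) ≤ k := mod_cast hk
  simp only [selmerBeta, of_apply]
  split_ifs <;> simp [hk']

section Multiplication

variable {ι : Type*} {n : ℕ} (k : ℤ)

lemma selmerBeta_mul_apply_succ (M : Matrix (Fin (n + 1)) ι ℝ) (i : Fin n) (j : ι) :
    (selmerBeta n k * M) i.succ j = M i.castSucc j := by
  have hrow (l : Fin (n + 1)) : selmerBeta n k i.succ l = if l = i.castSucc then 1 else 0 := by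
    simp only [selmerBeta, of_apply, Fin.ext_iff, Fin.val_succ, Fin.val_castSucc]
    grind
  simp [mul_apply, hrow]

lemma mul_selmerBeta_apply_of_lt (M : Matrix ι (Fin (n + 1)) ℝ) (i : ι) {j : Fin n}
    (hj : (j : ℕ) + 1 < n) :
    (M * selmerBeta n k) i j.castSucc = M i (Fin.castSucc ⟨j + 1, hj⟩) := by
  have hcol (l : Fin (n + 1)) :
      selmerBeta n k l j.castSucc = if l = Fin.castSucc ⟨j + 1, hj⟩ then 1 else 0 := by
    simp only [selmerBeta, of_apply, Fin.ext_iff, Fin.val_castSucc]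
    grind
  simp [mul_apply, hcol]

lemma mul_selmerBeta_apply_of_eq (M : Matrix ι (Fin (n + 1)) ℝ) (i : ι) {j : Fin n}
    (hj : (j : ℕ) + 1 = n) :
    (M * selmerBeta n k) i j.castSucc = k * M i 0 + M i (Fin.last n) := by
  have hcol (l : Fin (n + 1)) : selmerBeta n k l j.castSucc =
      (if l = 0 then (k : ℝ) else 0) + if l = Fin.last n then 1 else 0 := by
    simp only [selmerBeta, of_apply, Fin.ext_iff, Fin.val_castSucc, Fin.val_zero, Fin.val_last]
    grind
  simp [mul_apply, hcol, mul_add, Finset.sum_add_distrib, mul_comm]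

lemma mul_selmerBeta_apply_last (hn : 1 ≤ n) (M : Matrix ι (Fin (n + 1)) ℝ) (i : ι) :
    (M * selmerBeta n k) i (Fin.last n) = M i 0 := by
  have hcol (l : Fin (n + 1)) : selmerBeta n k l (Fin.last n) = if l = 0 then 1 else 0 := by
    simp only [selmerBeta, of_apply, Fin.ext_iff, Fin.val_last, Fin.val_zero]
    grind
  simp [mul_apply, hcol]

end Multiplication

section Powers

variable {n : ℕ} (k : ℤ)

lemma selmerBeta_pow_add_apply (m : ℕ) (i j : Fin (n + 1)) :
    (selmerBeta n k ^ (m + i)) i j = (selmerBeta n k ^ m) 0 j := by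
  induction i using Fin.induction with
  | zero => simp
  | succ i ih =>
    rw [Fin.val_succ, ← add_assoc, pow_succ', selmerBeta_mul_apply_succ]
    exact ih

lemma selmerBeta_pow_apply_castSucc (m : ℕ) (i : Fin (n + 1)) (j : Fin n) :
    (selmerBeta n k ^ m) i j.castSucc = (selmerBeta n k ^ (m + j)) i 0 := by
  obtain ⟨j, hj⟩ := j
  induction j generalizing m with
  | zero => simp
  | succ j ih =>
    calc (selmerBeta n k ^ m) i (Fin.castSucc ⟨j + 1, hj⟩)
        = (selmerBeta n k ^ m * selmerBeta n k) i (Fin.castSucc ⟨j, by omega⟩) :=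
          (mul_selmerBeta_apply_of_lt k _ i (j := ⟨j, by omega⟩) hj).symm
      _ = (selmerBeta n k ^ (m + 1 + j)) i 0 := by rw [← pow_succ, ih]
      _ = (selmerBeta n k ^ (m + (j + 1))) i 0 := by rw [add_assoc, add_comm 1]

lemma selmerBeta_pow_succ_apply_last (hn : 1 ≤ n) (m : ℕ) (i : Fin (n + 1)) :
    (selmerBeta n k ^ (m + 1)) i (Fin.last n) = (selmerBeta n k ^ m) i 0 := by
  rw [pow_succ, mul_selmerBeta_apply_last k hn]

lemma selmerBeta_pow_add_apply_zero (hn : 1 ≤ n) (m : ℕ) (i : Fin (n + 1)) :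
    (selmerBeta n k ^ (m + n)) i 0 =
      k * (selmerBeta n k ^ m) i 0 + (selmerBeta n k ^ m) i (Fin.last n) := by
  obtain ⟨j, hj⟩ : ∃ j : Fin n, (j : ℕ) + 1 = n :=
    ⟨⟨n - 1, by omega⟩, Nat.sub_add_cancel hn⟩
  calc (selmerBeta n k ^ (m + n)) i 0
      = (selmerBeta n k ^ (m + 1 + j)) i 0 := by rw [add_assoc, add_comm 1, hj]
    _ = (selmerBeta n k ^ (m + 1)) i j.castSucc := (selmerBeta_pow_apply_castSucc k _ i j).symm
    _ = k * (selmerBeta n k ^ m) i 0 + (selmerBeta n k ^ m) i (Fin.last n) := by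
      rw [pow_succ, mul_selmerBeta_apply_of_eq k _ i hj]

end Powers

section Positivity

variable {n : ℕ} {k : ℤ}

lemma selmerBeta_pow_mul_add_mul_apply_zero_zero_pos (hn : 1 ≤ n) (hk : 1 ≤ k) (a b : ℕ) :
    0 < (selmerBeta n k ^ (a * n + b * (n + 1))) 0 0 := by
  have hk' : (0 : ℝ) < k := mod_cast hk
  have hβ (m : ℕ) (i j : Fin (n + 1)) : 0 ≤ (selmerBeta n k ^ m) i j :=
    pow_apply_nonneg (selmerBeta_apply_nonneg n (zero_le_one.trans hk)) m i j
  induction a with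
  | zero =>
    induction b with
    | zero => simp
    | succ b ih =>
      rw [show 0 * n + (b + 1) * (n + 1) = 0 * n + b * (n + 1) + 1 + n by ring,
        selmerBeta_pow_add_apply_zero k hn, selmerBeta_pow_succ_apply_last k hn]
      exact add_pos_of_nonneg_of_pos (mul_nonneg hk'.le (hβ _ 0 0)) ih
  | succ a ih =>
    rw [show (a + 1) * n + b * (n + 1) = a * n + b * (n + 1) + n by ring,
      selmerBeta_pow_add_apply_zero k hn]
    exact add_pos_of_pos_of_nonneg (mul_pos hk' ih) (hβ _ 0 (Fin.last n))

lemma selmerBeta_pow_apply_zero_zero_pos (hn : 1 ≤ n) (hk : 1 ≤ k) {m : ℕ}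
    (hm : (n - 1) * n ≤ m) : 0 < (selmerBeta n k ^ m) 0 0 := by
  obtain ⟨a, b, rfl⟩ :=
    Nat.exists_add_mul_eq_of_gcd_dvd_of_mul_pred_le n (n + 1) m (by simp) hm
  exact selmerBeta_pow_mul_add_mul_apply_zero_zero_pos hn hk a b

end Positivity

/-- **Positivity of powers of the Selmer matrix.** For every `n ≥ 1` and every integer
`k ≥ 1`, all entries of `β(k)^p` are strictly positive for every `p ≥ n² + 1`. -/
theorem selmerBeta_pow_pos (n : ℕ) (hn : 1 ≤ n) (k : ℤ) (hk : 1 ≤ k)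
    (p : ℕ) (hp : n ^ 2 + 1 ≤ p) :
    ∀ i j : Fin (n + 1), 0 < (selmerBeta n k ^ p) i j := by
  intro i j
  have hi : (i : ℕ) ≤ n := i.is_le
  have hsq : n ^ 2 = (n - 1) * n + n := by
    rw [← Nat.succ_mul, Nat.succ_eq_add_one, Nat.sub_add_cancel hn, sq]
  obtain ⟨m, rfl⟩ : ∃ m, p = m + 1 + i := ⟨p - i - 1, by omega⟩
  rw [selmerBeta_pow_add_apply]
  cases j using Fin.lastCases with
  | last =>
    rw [selmerBeta_pow_succ_apply_last k hn]
    exact selmerBeta_pow_apply_zero_zero_pos hn hk (by omega)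
  | cast j =>
    rw [selmerBeta_pow_apply_castSucc]
    exact selmerBeta_pow_apply_zero_zero_pos hn hk (by omega)
end
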